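/- arXiv:1705.03731 — 8 statements merged into one kernel-verified Lean document; each statement's English description precedes it below -/
import Mathlib

section
/- For all real numbers x and y, φ₂ᵈ(x,y) = φ₁ᵈ(x,y) · φ₂ⁿ(x,y). -/
open Real

/-- The second (symmetric) Dirichlet eigenfunction of the equilateral triangle. -/
noncomputable def phi2D (x y : ℝ) : ℝ :=
  sin (2 * π * (5 * x + Real.sqrt 3 * y) / 3) - sin (2 * π * (5 * x - Real.sqrt 3 * y) / 3)
  + sin (2 * π * (x - 3 * Real.sqrt 3 * y) / 3) - sin (2 * π * (x + 3 * Real.sqrt 3 * y) / 3)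
  + sin (4 * π * (2 * x + Real.sqrt 3 * y) / 3) - sin (4 * π * (2 * x - Real.sqrt 3 * y) / 3)

/-- The first Dirichlet eigenfunction of the equilateral triangle. -/
noncomputable def phi1D (x y : ℝ) : ℝ :=
  2 * sin (2 * π * (x + y / Real.sqrt 3)) - 2 * sin (4 * π * y / Real.sqrt 3)
  - 2 * sin (2 * π * (x - y / Real.sqrt 3))

/-- The second (symmetric) Neumann eigenfunction of the equilateral triangle. -/
noncomputable def phi2N (x y : ℝ) : ℝ :=
  2 * cos (2 * π * x / 3) * (cos (2 * π * x / 3) + cos (2 * π * y / Real.sqrt 3)) - 1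

/-- The factorisation in the rescaled variables `a = 2πx/3`, `b = 2πy/√3`. -/
lemma sin_sub_sin_sum_eq_mul (a b : ℝ) :
    sin (5 * a + b) - sin (5 * a - b) + sin (a - 3 * b) - sin (a + 3 * b)
      + sin (4 * a + 2 * b) - sin (4 * a - 2 * b)
    = (2 * sin (3 * a + b) - 2 * sin (2 * b) - 2 * sin (3 * a - b))
      * (2 * cos a * (cos a + cos b) - 1) := by
  have cos_four : cos (4 * a) = 2 * (2 * cos a ^ 2 - 1) ^ 2 - 1 := by
    rw [show 4 * a = 2 * (2 * a) by ring, cos_two_mul, cos_two_mul]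
  have cos_five : cos (5 * a) = 2 * cos (4 * a) * cos a - cos (3 * a) := by
    rw [show 5 * a = 4 * a + a by ring, show 3 * a = 4 * a - a by ring, cos_add, cos_sub]
    ring
  have sin_cube : sin b ^ 3 = sin b * (1 - cos b ^ 2) := by
    rw [← sin_sq]
    ring
  simp only [sin_add, sin_sub, cos_five, cos_four, cos_three_mul, sin_three_mul, sin_two_mul,
    sin_cube]
  ring

theorem phi2D_eq_phi1D_mul_phi2N : ∀ x y : ℝ, phi2D x y = phi1D x y * phi2N x y := by
  intro x y
  have h3 : √3 ^ 2 = (3 : ℝ) := sq_sqrt (by norm_num)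
  have hy : y / √3 = √3 * y / 3 := by
    field_simp
    rw [h3]
  unfold phi2D phi1D phi2N
  rw [mul_div_assoc (4 * π) y, mul_div_assoc (2 * π) y, hy]
  convert sin_sub_sin_sum_eq_mul (2 * π * x / 3) (2 * π * (√3 * y / 3)) using 4 <;> ring_nf
end

section
/- For every point (x,y) of the open equilateral triangle T_e° one has φ₁ᵈ(x,y) < 0; in particular φ₁ᵈ does not vanish inside the triangle. -/
open Real

/-- The open equilateral triangle with vertices `(0,0)`, `(1,0)`, `(1/2, √3/2)`. -/
def openTriangle : Set (ℝ × ℝ) :=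
  {p | 0 < p.2 ∧ p.2 < Real.sqrt 3 * p.1 ∧ p.1 + p.2 / Real.sqrt 3 < 1}

/-- Product form of a sum of three sines. -/
theorem sin_two_mul_sub_sin_two_mul_sub_sin_two_mul_sub (a b : ℝ) :
    sin (2 * a) - sin (2 * (a - b)) - sin (2 * b) = -4 * (sin a * sin b * sin (a - b)) := by
  simp only [sin_two_mul, sin_sub, cos_sub]
  linear_combination
    (-2 * sin a * cos a) * sin_sq_add_cos_sq b + (2 * sin b * cos b) * sin_sq_add_cos_sq a

/-- `φ₁ᵈ` is negative in the open equilateral triangle; in particular it does not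
vanish inside the triangle. -/
theorem phi1D_neg_in_triangle :
    ∀ x y : ℝ, (x, y) ∈ openTriangle → phi1D x y < 0 := by
  rintro x y ⟨hy, hyx, hxy⟩
  dsimp only at hy hyx hxy
  have ht : 0 < y / √3 := by positivity
  have htx : y / √3 < x := by rwa [div_lt_iff₀' (by positivity)]
  have hsin {u : ℝ} (hu : 0 < u) (hu' : u < 1) : 0 < sin (π * u) :=
    sin_pos_of_pos_of_lt_pi (by positivity) (mul_lt_of_lt_one_right pi_pos hu')
  have key := sin_two_mul_sub_sin_two_mul_sub_sin_two_mul_sub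
    (π * (x + y / √3)) (π * (x - y / √3))
  have hpos := mul_pos (mul_pos (hsin (u := x + y / √3) (by linarith) hxy)
    (hsin (u := x - y / √3) (by linarith) (by linarith)))
    (hsin (u := x + y / √3 - (x - y / √3)) (by linarith) (by linarith))
  rw [← mul_sub] at key
  have harg : 4 * π * y / √3 = 2 * (π * (x + y / √3 - (x - y / √3))) := by ring
  rw [phi1D, harg, mul_assoc 2 π, mul_assoc 2 π]
  linarith
end

section
/- For every point (x,y) of the closed equilateral triangle T̄_e, φ₂ⁿ(x,y) + 1 = 0 if and only if x = 3/4 or x + √3 y = 3/2. Hence the zero set of φ₂ⁿ + 1 in the triangle consists of the two line segments {x = 3/4} ∩ T̄_e and {x + √3 y = 3/2} ∩ T̄_e, which meet at the boundary point (3/4, √3/4). -/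
open Real

/-- The closed equilateral triangle with vertices `(0,0)`, `(1,0)`, `(1/2, √3/2)`. -/
def closedTriangle : Set (ℝ × ℝ) :=
  {p | 0 ≤ p.2 ∧ p.2 ≤ Real.sqrt 3 * p.1 ∧ p.1 + p.2 / Real.sqrt 3 ≤ 1}

/-- Points of the closed triangle in the coordinates `(x, t)` with `y = √3 t`. -/
lemma mem_closedTriangle_sqrt_three_mul {x t : ℝ} :
    (x, √3 * t) ∈ closedTriangle ↔ 0 ≤ t ∧ t ≤ x ∧ x + t ≤ 1 := by
  have h3 : (0 : ℝ) < √3 := by positivity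
  simp only [closedTriangle, Set.mem_ofPred_eq, mul_div_cancel_left₀ t h3.ne',
    mul_nonneg_iff_of_pos_left h3, mul_le_mul_iff_right₀ h3]

lemma phi2N_add_one_eq_zero_iff {x y : ℝ} (h : (x, y) ∈ closedTriangle) :
    phi2N x y + 1 = 0 ↔ (x = 3 / 4 ∨ x + √3 * y = 3 / 2) := by
  have h3 : (0 : ℝ) < √3 := by positivity
  obtain ⟨t, rfl⟩ : ∃ t, y = √3 * t := ⟨y / √3, by field_simp⟩
  obtain ⟨ht, htx, hxt⟩ := mem_closedTriangle_sqrt_three_mul.1 h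
  have hπ := pi_pos
  have hsq : √3 * (√3 * t) = 3 * t := by
    rw [← mul_assoc, mul_self_sqrt (by norm_num)]
  have hdiv : 2 * π * (√3 * t) / √3 = 2 * π * t := by field_simp
  have hx : 2 * π * x / 3 ∈ Set.Icc 0 π := ⟨by nlinarith, by nlinarith⟩
  have hx' : π - 2 * π * x / 3 ∈ Set.Icc 0 π := ⟨by linarith [hx.2], by linarith [hx.1]⟩
  have ht' : 2 * π * t ∈ Set.Icc 0 π := ⟨by positivity, by nlinarith⟩
  have hhalf : π / 2 ∈ Set.Icc 0 π := ⟨by linarith, by linarith⟩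
  have hfirst : cos (2 * π * x / 3) = 0 ↔ x = 3 / 4 := by
    rw [← cos_pi_div_two, injOn_cos.eq_iff hx hhalf]
    constructor
    · intro e
      apply mul_left_cancel₀ hπ.ne'
      linarith
    · rintro rfl
      ring
  have hsecond : cos (2 * π * x / 3) + cos (2 * π * t) = 0 ↔ x + 3 * t = 3 / 2 := by
    rw [add_comm, ← sub_neg_eq_add, sub_eq_zero, ← cos_pi_sub, injOn_cos.eq_iff ht' hx']
    constructor
    · intro e
      apply mul_left_cancel₀ hπ.ne'
      linarith
    · intro e
      obtain rfl : x = 3 / 2 - 3 * t := by linarith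
      ring
  rw [phi2N, sub_add_cancel, hdiv, hsq, mul_eq_zero, mul_eq_zero, hfirst, hsecond]
  norm_num

/-- On the closed equilateral triangle, `φ₂ⁿ + 1` vanishes exactly on the union of the
two line segments `{x = 3/4}` and `{x + √3 y = 3/2}`, which meet at the boundary
point `(3/4, √3/4)`. -/
theorem zero_set_phi2N_plus_one :
    (∀ x y : ℝ, (x, y) ∈ closedTriangle →
      (phi2N x y + 1 = 0 ↔ (x = 3 / 4 ∨ x + Real.sqrt 3 * y = 3 / 2)))
    ∧ {p ∈ closedTriangle | phi2N p.1 p.2 + 1 = 0}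
        = ({p : ℝ × ℝ | p.1 = 3 / 4} ∩ closedTriangle)
          ∪ ({p : ℝ × ℝ | p.1 + Real.sqrt 3 * p.2 = 3 / 2} ∩ closedTriangle)
    ∧ ({p : ℝ × ℝ | p.1 = 3 / 4} ∩ closedTriangle)
        ∩ ({p : ℝ × ℝ | p.1 + Real.sqrt 3 * p.2 = 3 / 2} ∩ closedTriangle)
        = {(3 / 4, Real.sqrt 3 / 4)} := by
  refine ⟨fun x y h => phi2N_add_one_eq_zero_iff h, ?_, ?_⟩
  · ext ⟨x, y⟩
    simp only [Set.mem_ofPred_eq, Set.mem_union, Set.mem_inter_iff, ← or_and_right]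
    rw [and_comm]
    exact and_congr_left fun h => phi2N_add_one_eq_zero_iff h
  · have h3 : (0 : ℝ) < √3 := by positivity
    have hsq : √3 * √3 = 3 := mul_self_sqrt (by norm_num)
    have hmem : ((3 / 4 : ℝ), √3 / 4) ∈ closedTriangle := by
      rw [div_eq_mul_one_div √3, mem_closedTriangle_sqrt_three_mul]
      norm_num
    ext ⟨x, y⟩
    simp only [Set.mem_inter_iff, Set.mem_ofPred_eq, Set.mem_singleton_iff, Prod.mk.injEq]
    constructor
    · rintro ⟨⟨hx, -⟩, hy, -⟩
      refine ⟨hx, mul_left_cancel₀ h3.ne' ?_⟩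
      linarith
    · rintro ⟨rfl, rfl⟩
      exact ⟨⟨rfl, hmem⟩, by linarith, hmem⟩
end

section
/- The open set {(x,y) ∈ T_e° : φ₂ⁿ(x,y) + 1 ≠ 0} has exactly 3 connected components. -/
open Real

/-- A disjoint union of nonempty, open, preconnected sets has one connected component for each
member of the family. -/
theorem card_connectedComponents_of_iUnion {X ι : Type*} [TopologicalSpace X] {S : Set X}
    (U : ι → Set X) (hS : S = ⋃ i, U i) (ho : ∀ i, IsOpen (U i)) (hc : ∀ i, IsPreconnected (U i))
    (hne : ∀ i, (U i).Nonempty) (hd : ∀ i j x, x ∈ U i → x ∈ U j → i = j) :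
    Nat.card (ConnectedComponents S) = Nat.card ι := by
  have hmem (p : S) : ∃ i, p.1 ∈ U i := by simpa [hS] using p.2
  choose f hf using hmem
  have hfib (i : ι) : f ⁻¹' {i} = Subtype.val ⁻¹' U i := by
    ext p
    exact ⟨fun h => h ▸ hf p, fun h => hd _ _ _ (hf p) h⟩
  let : TopologicalSpace ι := ⊥
  have : DiscreteTopology ι := ⟨rfl⟩
  have hcont : Continuous f := continuous_discrete_rng.2 fun i => by
    rw [hfib i]
    exact (ho i).preimage continuous_subtype_val
  refine Nat.card_congr (Equiv.ofBijective hcont.connectedComponentsLift ⟨?_, fun i => ?_⟩)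
  · rintro ⟨p⟩ ⟨q⟩ (h : f p = f q)
    have hpre : IsPreconnected (f ⁻¹' {f q}) := by
      rw [← Topology.IsInducing.subtypeVal.isPreconnected_image, hfib, Subtype.image_preimage_coe,
        Set.inter_eq_right.2 (hS ▸ Set.subset_iUnion U (f q))]
      exact hc _
    exact ConnectedComponents.coe_eq_coe'.2 (hpre.subset_connectedComponent rfl h)
  · obtain ⟨x, hx⟩ := hne i
    have hxS : x ∈ S := hS ▸ Set.mem_iUnion_of_mem i hx
    exact ⟨((⟨x, hxS⟩ : S) : ConnectedComponents S), hd _ _ _ (hf ⟨x, hxS⟩) hx⟩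

/-- The nodal set of `φ₂ⁿ + 1` in the open triangle consists of two line segments. -/
theorem phi2N_add_one_eq_zero_iff_s6 {p : ℝ × ℝ} (hp : p ∈ openTriangle) :
    phi2N p.1 p.2 + 1 = 0 ↔ p.1 = 3 / 4 ∨ p.1 / 3 + p.2 / √3 = 1 / 2 := by
  obtain ⟨x, y⟩ := p
  obtain ⟨hy, hyx, hxy⟩ := hp
  dsimp only at hy hyx hxy ⊢
  have h3 : 0 < √3 := by positivity
  obtain ⟨t, rfl⟩ : ∃ t, y = √3 * t := ⟨y / √3, by field_simp⟩
  have ht : √3 * t / √3 = t := by field_simp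
  rw [ht] at hxy ⊢
  replace hyx : t < x := lt_of_mul_lt_mul_left hyx h3.le
  replace hy : 0 < t := by
    by_contra! h
    nlinarith
  have hπ := pi_pos
  have hcos (u : ℝ) (h0 : -1 / 2 < u) (h1 : u < 3 / 2) : cos (π * u) = 0 ↔ u = 1 / 2 := by
    refine ⟨fun h => ?_, fun h => by rw [h, mul_one_div, cos_pi_div_two]⟩
    obtain ⟨k, hk⟩ := cos_eq_zero_iff.1 h
    have hu : u = (2 * k + 1) / 2 := by
      apply mul_left_cancel₀ hπ.ne'
      rw [hk]
      ring
    have hk0 : k = 0 := by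
      have h2 : (-1 : ℝ) < k := by linarith
      have h3 : (k : ℝ) < 1 := by linarith
      have h4 : -1 < k := by exact_mod_cast h2
      have h5 : k < 1 := by exact_mod_cast h3
      omega
    simp [hu, hk0]
  have key : phi2N x (√3 * t) + 1
      = 4 * cos (π * (2 * x / 3)) * (cos (π * (x / 3 + t)) * cos (π * (x / 3 - t))) := by
    have e : 2 * π * (√3 * t) / √3 = 2 * π * t := by field_simp
    rw [phi2N, e, cos_add_cos]
    ring_nf
  rw [key, mul_eq_zero, mul_eq_zero, mul_eq_zero, hcos (2 * x / 3) (by linarith) (by linarith),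
    hcos (x / 3 + t) (by linarith) (by linarith), hcos (x / 3 - t) (by linarith) (by linarith)]
  constructor
  · rintro ((h | h) | h | h)
    · norm_num at h
    · left; linarith
    · right; exact h
    · linarith
  · rintro (h | h)
    · left; right; linarith
    · right; left; exact h

/-- The three nodal domains of `φ₂ⁿ + 1`: one to the right of the segment `x = 3 / 4`, and two to
its left, separated by the segment `x / 3 + y / √3 = 1 / 2`. -/
def nodalDomain : Fin 3 → Set (ℝ × ℝ) :=
  ![openTriangle ∩ {p | 3 / 4 < p.1},
    openTriangle ∩ ({p | p.1 < 3 / 4} ∩ {p | p.1 / 3 + p.2 / √3 < 1 / 2}),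
    openTriangle ∩ {p | 1 / 2 < p.1 / 3 + p.2 / √3}]

theorem isOpen_openTriangle : IsOpen openTriangle := by
  simp only [openTriangle, Set.ofPred_and]
  exact (isOpen_lt (by fun_prop) (by fun_prop)).inter
    ((isOpen_lt (by fun_prop) (by fun_prop)).inter (isOpen_lt (by fun_prop) (by fun_prop)))

theorem isOpen_nodalDomain (i : Fin 3) : IsOpen (nodalDomain i) := by
  fin_cases i
  · exact isOpen_openTriangle.inter (isOpen_lt (by fun_prop) (by fun_prop))
  · exact isOpen_openTriangle.inter
      ((isOpen_lt (by fun_prop) (by fun_prop)).inter (isOpen_lt (by fun_prop) (by fun_prop)))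
  · exact isOpen_openTriangle.inter (isOpen_lt (by fun_prop) (by fun_prop))

theorem convex_setOf_linear_lt (a b c : ℝ) : Convex ℝ {p : ℝ × ℝ | a * p.1 + b * p.2 < c} :=
  convex_halfSpace_lt (𝕜 := ℝ) (f := fun p : ℝ × ℝ => a * p.1 + b * p.2)
    ⟨fun p q => by simp; ring, fun r p => by simp; ring⟩ c

theorem convex_openTriangle : Convex ℝ openTriangle := by
  convert (convex_setOf_linear_lt 0 (-1) 0).inter
    ((convex_setOf_linear_lt (-√3) 1 0).inter (convex_setOf_linear_lt 1 (1 / √3) 1)) using 1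
  ext p
  simp only [openTriangle, Set.mem_ofPred_eq, Set.mem_inter_iff]
  refine and_congr ?_ (and_congr ?_ ?_)
  · constructor <;> intro h <;> linarith
  · constructor <;> intro h <;> linarith
  · ring_nf

theorem convex_nodalDomain (i : Fin 3) : Convex ℝ (nodalDomain i) := by
  fin_cases i
  · refine convex_openTriangle.inter ?_
    convert convex_setOf_linear_lt (-1) 0 (-(3 / 4)) using 3
    constructor <;> intro h <;> linarith
  · refine convex_openTriangle.inter (.inter ?_ ?_)
    · convert convex_setOf_linear_lt 1 0 (3 / 4) using 3
      ring_nf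
    · convert convex_setOf_linear_lt (1 / 3) (1 / √3) (1 / 2) using 3
      ring_nf
  · refine convex_openTriangle.inter ?_
    convert convex_setOf_linear_lt (-(1 / 3)) (-(1 / √3)) (-(1 / 2)) using 3 with p
    have e : -(1 / 3) * p.1 + -(1 / √3) * p.2 = -(p.1 / 3 + p.2 / √3) := by ring
    rw [e, neg_lt_neg_iff]

theorem nonempty_nodalDomain (i : Fin 3) : (nodalDomain i).Nonempty := by
  have h3 : 0 < √3 := by positivity
  have e (t : ℝ) : √3 * t / √3 = t := by field_simp
  have hT {x t : ℝ} (h0 : 0 < t) (h1 : t < x) (h2 : x + t < 1) : (x, √3 * t) ∈ openTriangle :=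
    ⟨mul_pos h3 h0, mul_lt_mul_of_pos_left h1 h3, by simpa only [e] using h2⟩
  fin_cases i
  · exact ⟨(7 / 8, √3 * (1 / 16)), hT (by norm_num) (by norm_num) (by norm_num),
      by simp only [Set.mem_ofPred_eq]; norm_num⟩
  · exact ⟨(1 / 2, √3 * (1 / 4)), hT (by norm_num) (by norm_num) (by norm_num),
      by simp only [Set.mem_ofPred_eq]; norm_num, by simp only [Set.mem_ofPred_eq, e]; norm_num⟩
  · exact ⟨(1 / 2, √3 * (2 / 5)), hT (by norm_num) (by norm_num) (by norm_num),
      by simp only [Set.mem_ofPred_eq, e]; norm_num⟩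

theorem nodalDomain_disjoint (i j : Fin 3) (p : ℝ × ℝ) (hi : p ∈ nodalDomain i)
    (hj : p ∈ nodalDomain j) : i = j := by
  fin_cases i <;> fin_cases j <;> first
    | rfl
    | (exfalso
       simp [nodalDomain, openTriangle] at hi hj
       linarith)

theorem nodalSet_compl_eq_iUnion :
    {p ∈ openTriangle | phi2N p.1 p.2 + 1 ≠ 0} = ⋃ i, nodalDomain i := by
  ext p
  simp only [Set.mem_ofPred_eq, Set.mem_iUnion, Fin.exists_fin_succ, nodalDomain]
  by_cases hp : p ∈ openTriangle
  · have hx := hp.2.2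
    rw [ne_eq, phi2N_add_one_eq_zero_iff_s6 hp, not_or]
    simp only [hp, true_and, Matrix.cons_val_zero, Matrix.cons_val_succ, Set.mem_inter_iff,
      Set.mem_ofPred_eq, IsEmpty.exists_iff, or_false]
    constructor
    · rintro ⟨h1, h2⟩
      rcases lt_or_gt_of_ne h1 with h1 | h1 <;> rcases lt_or_gt_of_ne h2 with h2 | h2 <;>
        tauto
    · rintro (h | ⟨h, h'⟩ | h) <;> constructor <;> intro h <;> linarith
  · simp [hp]

/-- The linear combination `φ₂ⁿ + 1` of the first two Neumann eigenfunctions of the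
equilateral triangle has exactly `3` nodal domains, contradicting the Extended
Courant Property (the Courant bound is `κ = 2`). -/
theorem three_nodal_domains_phi2N_plus_one :
    Nat.card (ConnectedComponents
      ↥{p ∈ openTriangle | phi2N p.1 p.2 + 1 ≠ 0}) = 3 := by
  rw [card_connectedComponents_of_iUnion nodalDomain nodalSet_compl_eq_iUnion isOpen_nodalDomain
    (fun i => (convex_nodalDomain i).isPreconnected) nonempty_nodalDomain nodalDomain_disjoint,
    Nat.card_fin]
end

section
/- Let n ≥ 1 be an integer and let a be a real number with n − 1 < a < n. Then the open set {ξ ∈ ℝⁿ : |ξᵢ| < 1 for all i, and ξ₁² + ⋯ + ξₙ² ≠ a} has exactly 2ⁿ + 1 connected components. -/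
open Set Function

/-- If a set is the union of pairwise disjoint connected open sets, then these are its connected
components. -/
theorem card_connectedComponents_of_isOpen_isConnected {X ι : Type*} [TopologicalSpace X]
    {S : Set X} {V : ι → Set X} (hopen : ∀ i, IsOpen (V i)) (hdisj : Pairwise (Disjoint on V))
    (hunion : ⋃ i, V i = S) (hconn : ∀ i, IsConnected (V i)) :
    Nat.card (ConnectedComponents S) = Nat.card ι := by
  let U : ι → Set S := fun i => Subtype.val ⁻¹' V i
  have hU : ∀ i, IsOpen (U i) := fun i => (hopen i).preimage continuous_subtype_val
  have hUdisj : Pairwise (Disjoint on U) := fun i j hij => (hdisj hij).preimage _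
  have hUunion : ⋃ i, U i = univ := by
    rw [← preimage_iUnion, hunion, Subtype.coe_preimage_self]
  have hUclopen : ∀ i, IsClopen (U i) := by
    refine fun i => ⟨⟨?_⟩, hU i⟩
    have hcompl : (U i)ᶜ = ⋃ j, ⋃ _ : j ≠ i, U j := by
      ext x
      simp only [mem_compl_iff, mem_iUnion, exists_prop]
      constructor
      · intro hx
        obtain ⟨j, hj⟩ := iUnion_eq_univ_iff.mp hUunion x
        exact ⟨j, fun h => hx (h ▸ hj), hj⟩
      · rintro ⟨j, hji, hj⟩ hx
        exact disjoint_left.mp (hUdisj hji) hj hx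
    rw [hcompl]
    exact isOpen_iUnion fun j => isOpen_iUnion fun _ => hU j
  have hUconn : ∀ i, IsConnected (U i) := by
    intro i
    have himage : Subtype.val '' U i = V i := by
      rw [Subtype.image_preimage_coe, inter_eq_right, ← hunion]
      exact subset_iUnion V i
    refine ⟨?_, ?_⟩
    · rw [← image_nonempty (f := Subtype.val), himage]
      exact (hconn i).nonempty
    · rw [← Topology.IsInducing.subtypeVal.isPreconnected_image, himage]
      exact (hconn i).isPreconnected
  exact Nat.card_congr
    (ConnectedComponents.equivOfIsClopenOfIsConnected hUclopen hUdisj hUunion hUconn)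

/-- The part of the open cube `(-1, 1)ⁿ` inside the sphere `∑ ξᵢ² = a`. -/
def cubeInsideSphere (n : ℕ) (a : ℝ) : Set (Fin n → ℝ) :=
  {ξ | (∀ i, |ξ i| < 1) ∧ ∑ i, ξ i ^ 2 < a}

/-- The sign `1` or `-1` encoded by a Boolean. -/
def boolSign (b : Bool) : ℝ := bif b then 1 else -1

theorem boolSign_mul_self (b : Bool) : boolSign b * boolSign b = 1 := by
  cases b <;> simp [boolSign]

theorem boolSign_sq (b : Bool) : boolSign b ^ 2 = 1 := by
  rw [sq, boolSign_mul_self]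

theorem abs_boolSign (b : Bool) : |boolSign b| = 1 := by
  cases b <;> simp [boolSign]

/-- The part of the open cube `(-1, 1)ⁿ` outside the sphere `∑ ξᵢ² = a` lying in the open orthant
of sign pattern `s`. -/
def cubeCorner {n : ℕ} (a : ℝ) (s : Fin n → Bool) : Set (Fin n → ℝ) :=
  {ξ | (∀ i, 0 < boolSign (s i) * ξ i ∧ boolSign (s i) * ξ i < 1) ∧ a < ∑ i, ξ i ^ 2}

theorem isOpen_cubeInsideSphere (n : ℕ) (a : ℝ) : IsOpen (cubeInsideSphere n a) := by
  refine IsOpen.and ?_ (isOpen_lt (by fun_prop) (by fun_prop))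
  simp only [ofPred_forall]
  exact isOpen_iInter_of_finite fun i => isOpen_lt (by fun_prop) (by fun_prop)

theorem isOpen_cubeCorner {n : ℕ} (a : ℝ) (s : Fin n → Bool) : IsOpen (cubeCorner a s) := by
  refine IsOpen.and ?_ (isOpen_lt (by fun_prop) (by fun_prop))
  simp only [ofPred_forall]
  exact isOpen_iInter_of_finite fun i =>
    (isOpen_lt (by fun_prop) (by fun_prop)).and (isOpen_lt (by fun_prop) (by fun_prop))

theorem isConnected_cubeInsideSphere (n : ℕ) {a : ℝ} (ha : 0 < a) :
    IsConnected (cubeInsideSphere n a) := by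
  refine ⟨⟨0, by simp, by simpa using ha⟩, Convex.isPreconnected ?_⟩
  rintro x ⟨hx, hxa⟩ y ⟨hy, hya⟩ b c hb hc hbc
  refine ⟨fun i => ?_, ?_⟩
  · have hconv := convex_Ioo (-1 : ℝ) 1 (abs_lt.mp (hx i)) (abs_lt.mp (hy i)) hb hc hbc
    exact abs_lt.mpr hconv
  · calc ∑ i, (b • x + c • y) i ^ 2
        ≤ ∑ i, (b * x i ^ 2 + c * y i ^ 2) := by
          refine Finset.sum_le_sum fun i _ => ?_
          exact (even_two.convexOn_pow (𝕜 := ℝ)).2 (mem_univ _) (mem_univ _) hb hc hbc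
      _ = b * ∑ i, x i ^ 2 + c * ∑ i, y i ^ 2 := by
          rw [Finset.sum_add_distrib, Finset.mul_sum, Finset.mul_sum]
      _ < a := convex_Iio a hxa hya hb hc hbc

theorem isConnected_cubeCorner {n : ℕ} (hn : 1 ≤ n) {a : ℝ} (ha₀ : 0 ≤ a) (ha : a < n)
    (s : Fin n → Bool) : IsConnected (cubeCorner a s) := by
  have hn₀ : (0 : ℝ) < n := by exact_mod_cast hn
  let K : Set (Fin n → ℝ) := {u | (∀ i, 0 < u i ∧ u i < 1) ∧ a < ∑ i, u i}
  have hK : IsConnected K := by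
    refine ⟨⟨fun _ => (a / n + 1) / 2, fun _ => ?_, ?_⟩, Convex.isPreconnected ?_⟩
    · have h₀ : 0 ≤ a / n := by positivity
      have h₁ : a / n < 1 := (div_lt_one hn₀).mpr ha
      constructor <;> linarith
    · simp only [Finset.sum_const, Finset.card_univ, Fintype.card_fin, nsmul_eq_mul]
      field_simp
      linarith
    · rintro x ⟨hx, hxa⟩ y ⟨hy, hya⟩ b c hb hc hbc
      refine ⟨fun i => convex_Ioo (0 : ℝ) 1 (hx i) (hy i) hb hc hbc, ?_⟩
      have hsum : ∑ i, (b • x + c • y) i = b * ∑ i, x i + c * ∑ i, y i := by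
        simp [Finset.sum_add_distrib, Finset.mul_sum]
      rw [hsum]
      exact convex_Ioi a hxa hya hb hc hbc
  have himage : (fun u i => boolSign (s i) * √(u i)) '' K = cubeCorner a s := by
    ext ξ
    constructor
    · rintro ⟨u, ⟨hu, hua⟩, rfl⟩
      refine ⟨fun i => ?_, ?_⟩
      · simp only [← mul_assoc, boolSign_mul_self, one_mul]
        exact ⟨Real.sqrt_pos.mpr (hu i).1, (Real.sqrt_lt' one_pos).mpr (by simpa using (hu i).2)⟩
      · simpa only [mul_pow, boolSign_sq, one_mul, Real.sq_sqrt (hu _).1.le] using hua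
    · rintro ⟨hξ, hξa⟩
      have hsq : ∀ i, (boolSign (s i) * ξ i) ^ 2 = ξ i ^ 2 := fun i => by
        rw [mul_pow, boolSign_sq, one_mul]
      refine ⟨fun i => ξ i ^ 2, ⟨fun i => ?_, hξa⟩, funext fun i => ?_⟩
      · beta_reduce
        rw [← hsq i]
        exact ⟨pow_pos (hξ i).1 2, pow_lt_one₀ (hξ i).1.le (hξ i).2 two_ne_zero⟩
      · beta_reduce
        rw [← hsq i, Real.sqrt_sq (hξ i).1.le, ← mul_assoc, boolSign_mul_self, one_mul]
  rw [← himage]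
  exact hK.image _ (by fun_prop)

theorem disjoint_cubeCorner {n : ℕ} (a : ℝ) {s t : Fin n → Bool} (hst : s ≠ t) :
    Disjoint (cubeCorner a s) (cubeCorner a t) := by
  obtain ⟨i, hi⟩ := Function.ne_iff.mp hst
  refine disjoint_left.mpr fun ξ hs ht => ?_
  have h₁ := (hs.1 i).1
  have h₂ := (ht.1 i).1
  cases hsi : s i <;> cases hti : t i <;> simp_all [boolSign] <;> linarith

theorem disjoint_cubeInsideSphere_cubeCorner {n : ℕ} (a : ℝ) (s : Fin n → Bool) :
    Disjoint (cubeInsideSphere n a) (cubeCorner a s) :=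
  disjoint_left.mpr fun _ h₁ h₂ => lt_asymm h₁.2 h₂.2

/-- A point of the open cube whose squared norm exceeds `n - 1` has no vanishing coordinate. -/
theorem ne_zero_of_sub_one_lt_sum_sq {n : ℕ} {ξ : Fin n → ℝ} (hξ : ∀ i, |ξ i| < 1)
    (h : (n : ℝ) - 1 < ∑ i, ξ i ^ 2) (i : Fin n) : ξ i ≠ 0 := by
  intro hi
  have hle : ∑ j ∈ Finset.univ.erase i, ξ j ^ 2 ≤ (n : ℝ) - 1 := by
    calc ∑ j ∈ Finset.univ.erase i, ξ j ^ 2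
        ≤ ∑ _j ∈ Finset.univ.erase i, (1 : ℝ) :=
          Finset.sum_le_sum fun j _ => (sq_le_one_iff_abs_le_one _).mpr (hξ j).le
      _ = (n : ℝ) - 1 := by
          simp [Finset.card_erase_of_mem, Nat.cast_sub (Nat.one_le_of_lt i.pos)]
  rw [← Finset.add_sum_erase _ _ (Finset.mem_univ i), hi] at h
  linarith

theorem iUnion_cubeInsideSphere_cubeCorner {n : ℕ} {a : ℝ} (ha : (n : ℝ) - 1 < a) :
    ⋃ o : Option (Fin n → Bool), o.elim (cubeInsideSphere n a) (cubeCorner a) =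
      {ξ : Fin n → ℝ | (∀ i, |ξ i| < 1) ∧ ∑ i, (ξ i) ^ 2 ≠ a} := by
  ext ξ
  rw [iUnion_option]
  simp only [Option.elim_none, Option.elim_some, mem_union, mem_iUnion, mem_ofPred_eq]
  constructor
  · rintro (⟨h, hlt⟩ | ⟨s, h, hlt⟩)
    · exact ⟨h, hlt.ne⟩
    · refine ⟨fun i => ?_, hlt.ne'⟩
      have habs : |ξ i| = boolSign (s i) * ξ i := by
        rw [← abs_of_pos (h i).1, abs_mul, abs_boolSign, one_mul]
      rw [habs]
      exact (h i).2
  · rintro ⟨h, hne⟩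
    rcases hne.lt_or_gt with hlt | hlt
    · exact Or.inl ⟨h, hlt⟩
    · refine Or.inr ⟨fun i => decide (0 < ξ i), fun i => ?_, hlt⟩
      have habs : boolSign (decide (0 < ξ i)) * ξ i = |ξ i| := by
        by_cases hi : 0 < ξ i
        · simp [boolSign, hi, abs_of_pos hi]
        · simp [boolSign, hi, abs_of_nonpos (not_lt.mp hi)]
      rw [habs]
      exact ⟨abs_pos.mpr (ne_zero_of_sub_one_lt_sum_sq h (ha.trans hlt) i), h i⟩

/-- For `n ≥ 1` and `n − 1 < a < n`, the complement in the open cube `(−1,1)ⁿ` of the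
sphere `ξ₁² + ⋯ + ξₙ² = a` has exactly `2ⁿ + 1` connected components. -/
theorem components_cube_minus_sphere (n : ℕ) (hn : 1 ≤ n) (a : ℝ)
    (ha₁ : (n : ℝ) - 1 < a) (ha₂ : a < n) :
    Nat.card (ConnectedComponents
      ↥{ξ : Fin n → ℝ | (∀ i, |ξ i| < 1) ∧ ∑ i, (ξ i) ^ 2 ≠ a}) = 2 ^ n + 1 := by
  have ha₀ : 0 < a := by
    have : (1 : ℝ) ≤ n := by exact_mod_cast hn
    linarith
  rw [card_connectedComponents_of_isOpen_isConnected (ι := Option (Fin n → Bool)) ?_ ?_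
    (iUnion_cubeInsideSphere_cubeCorner ha₁) ?_]
  · simp
  · rintro (_ | s)
    exacts [isOpen_cubeInsideSphere n a, isOpen_cubeCorner a s]
  · rintro (_ | s) (_ | t) hst
    · exact absurd rfl hst
    · exact disjoint_cubeInsideSphere_cubeCorner a t
    · exact (disjoint_cubeInsideSphere_cubeCorner a s).symm
    · exact disjoint_cubeCorner a fun h => hst (congrArg some h)
  · rintro (_ | s)
    exacts [isConnected_cubeInsideSphere n ha₀, isConnected_cubeCorner hn ha₀.le ha₂ s]
end

section
/- Let n ≥ 1 be an integer and let a be a real number with n − 1 < a < n. Then the open set {x ∈ ℝⁿ : 0 < xᵢ < π for all i, and cos²(x₁) + ⋯ + cos²(xₙ) ≠ a} has exactly 2ⁿ + 1 connected components. -/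
open Real

/-- A continuous surjection onto a discrete space whose fibres are joined by paths counts the
connected components of its domain. -/
theorem card_connectedComponents_eq_of_joined {X Y : Type*} [TopologicalSpace X]
    [TopologicalSpace Y] [DiscreteTopology Y] {f : X → Y} (hf : Continuous f)
    (hsurj : Function.Surjective f) (hjoin : ∀ x y, f x = f y → Joined x y) :
    Nat.card (ConnectedComponents X) = Nat.card Y := by
  refine Nat.card_eq_of_bijective hf.connectedComponentsLift ⟨?_, fun y => ?_⟩
  · intro p q hpq
    obtain ⟨x, rfl⟩ := ConnectedComponents.surjective_coe p
    obtain ⟨y, rfl⟩ := ConnectedComponents.surjective_coe q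
    rw [hf.connectedComponentsLift_apply_coe, hf.connectedComponentsLift_apply_coe] at hpq
    exact ConnectedComponents.coe_eq_coe'.2
      (pathComponent_subset_component y (hjoin x y hpq).symm)
  · obtain ⟨x, rfl⟩ := hsurj y
    exact ⟨x, hf.connectedComponentsLift_apply_coe x⟩

theorem cos_sq_le_cos_sq_of_abs_sub_le {u v : ℝ} (h : |u - π / 2| ≤ |v - π / 2|)
    (hv : |v - π / 2| ≤ π / 2) : cos u ^ 2 ≤ cos v ^ 2 := by
  have key : ∀ t : ℝ, |t - π / 2| ≤ π / 2 → cos t ^ 2 = sin |t - π / 2| ^ 2 := by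
    intro t ht
    rw [← abs_sin_eq_sin_abs_of_abs_le_pi (by linarith [pi_pos]), sq_abs, sin_sub_pi_div_two,
      neg_sq]
  rw [key u (h.trans hv), key v hv]
  have h0 := abs_nonneg (u - π / 2)
  exact pow_le_pow_left₀ (sin_nonneg_of_nonneg_of_le_pi h0 (by linarith [pi_pos]))
    (sin_le_sin_of_le_of_le_pi_div_two (by linarith [pi_pos]) hv h) 2

theorem abs_sub_pi_div_two_lt {t : ℝ} (ht : 0 < t ∧ t < π) : |t - π / 2| < π / 2 := by
  rw [abs_lt]
  constructor <;> linarith [ht.1, ht.2]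

/-- If `∑ cos² xᵢ > n - 1` then no coordinate equals `π / 2`. -/
theorem ne_pi_div_two_of_lt_sum_cos_sq {n : ℕ} {x : Fin n → ℝ}
    (h : (n : ℝ) - 1 < ∑ i, cos (x i) ^ 2) (i : Fin n) : x i ≠ π / 2 := by
  intro hi
  have h1 : ∑ j, cos (x j) ^ 2 ≤ ∑ j, (1 - if j = i then (1 : ℝ) else 0) := by
    refine Finset.sum_le_sum fun j _ => ?_
    split_ifs with hj
    · simp [hj, hi]
    · simpa using cos_sq_le_one (x j)
  rw [Finset.sum_sub_distrib] at h1
  simp at h1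
  linarith

/-- The complement in the open hypercube `(0,π)ⁿ` of the level set `∑ cos² xᵢ = a`. -/
abbrev nodalComplement (n : ℕ) (a : ℝ) : Set (Fin n → ℝ) :=
  {x | (∀ i, 0 < x i ∧ x i < π) ∧ ∑ i, cos (x i) ^ 2 ≠ a}

theorem joinedIn_of_forall_mem_convex {ι : Type*} {S : Set (ι → ℝ)} {x z : ι → ℝ}
    (T : ι → Set ℝ) (hT : ∀ i, Convex ℝ (T i)) (hx : ∀ i, x i ∈ T i) (hz : ∀ i, z i ∈ T i)
    (hS : ∀ w : ι → ℝ, (∀ i, w i ∈ T i) → w ∈ S) : JoinedIn S x z := by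
  refine JoinedIn.of_segment_subset ?_
  have hconv : Convex ℝ (Set.univ.pi T) := convex_pi fun i _ => hT i
  exact (hconv.segment_subset (fun i _ => hx i) (fun i _ => hz i)).trans
    fun w hw => hS w fun i => hw i trivial

theorem joinedIn_center {n : ℕ} {a : ℝ} {x : Fin n → ℝ} (hx : ∀ i, 0 < x i ∧ x i < π)
    (h : ∑ i, cos (x i) ^ 2 < a) : JoinedIn (nodalComplement n a) x fun _ => π / 2 := by
  refine joinedIn_of_forall_mem_convex (fun i => Metric.closedBall (π / 2) |x i - π / 2|)
    (fun i => convex_closedBall _ _) (fun i => ?_) (fun i => ?_) fun w hw => ⟨fun i => ?_, ?_⟩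
  · simp [Real.dist_eq]
  · simp
  · have h1 := hw i
    have h2 := abs_sub_pi_div_two_lt (hx i)
    rw [Metric.mem_closedBall, Real.dist_eq] at h1
    have h3 := abs_lt.1 (h1.trans_lt h2)
    constructor <;> linarith
  · refine (lt_of_le_of_lt (Finset.sum_le_sum fun i _ => ?_) h).ne
    have h1 := hw i
    rw [Metric.mem_closedBall, Real.dist_eq] at h1
    exact cos_sq_le_cos_sq_of_abs_sub_le h1 (abs_sub_pi_div_two_lt (hx i)).le

/-- A point above the level `a` can be moved, inside its orthant, away from the centre. -/
theorem joinedIn_away_from_center {n : ℕ} {a : ℝ} {x z : Fin n → ℝ}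
    (hx : ∀ i, 0 < x i ∧ x i < π) (h : a < ∑ i, cos (x i) ^ 2)
    (hz : ∀ i, x i < π / 2 ∧ 0 < z i ∧ z i ≤ x i ∨ π / 2 < x i ∧ x i ≤ z i ∧ z i < π) :
    JoinedIn (nodalComplement n a) x z := by
  refine joinedIn_of_forall_mem_convex
    (fun i => if x i < π / 2 then Set.Ioc 0 (x i) else Set.Ico (x i) π)
    (fun i => ?_) (fun i => ?_) (fun i => ?_) fun w hw => ?_
  · split_ifs
    exacts [convex_Ioc _ _, convex_Ico _ _]
  · split_ifs
    exacts [⟨(hx i).1, le_rfl⟩, ⟨le_rfl, (hx i).2⟩]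
  · split_ifs with hi
    · rcases hz i with h1 | h1
      · exact h1.2
      · linarith [h1.1]
    · rcases hz i with h1 | h1
      · exact absurd h1.1 hi
      · exact h1.2
  · have hw' : ∀ i, (0 < w i ∧ w i < π) ∧ |x i - π / 2| ≤ |w i - π / 2| := by
      intro i
      have h1 := hw i
      have h2 := hx i
      split_ifs at h1 with hi
      · refine ⟨⟨h1.1, h1.2.trans_lt h2.2⟩, ?_⟩
        rw [abs_of_neg (by linarith), abs_of_neg (by linarith [h1.2])]
        linarith [h1.2]
      · refine ⟨⟨h2.1.trans_le h1.1, h1.2⟩, ?_⟩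
        rw [abs_of_nonneg (by linarith), abs_of_nonneg (by linarith [h1.1])]
        linarith [h1.1]
    exact ⟨fun i => (hw' i).1, (lt_of_lt_of_le h (Finset.sum_le_sum fun i _ =>
      cos_sq_le_cos_sq_of_abs_sub_le (hw' i).2 (abs_sub_pi_div_two_lt (hw' i).1).le)).ne'⟩

theorem joinedIn_of_same_orthant {n : ℕ} {a : ℝ} (ha : (n : ℝ) - 1 < a) {x y : Fin n → ℝ}
    (hx : ∀ i, 0 < x i ∧ x i < π) (hxa : a < ∑ i, cos (x i) ^ 2)
    (hy : ∀ i, 0 < y i ∧ y i < π) (hya : a < ∑ i, cos (y i) ^ 2)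
    (hxy : ∀ i, x i < π / 2 ↔ y i < π / 2) : JoinedIn (nodalComplement n a) x y := by
  let z : Fin n → ℝ := fun i => if x i < π / 2 then min (x i) (y i) else max (x i) (y i)
  have hxz : JoinedIn (nodalComplement n a) x z := by
    refine joinedIn_away_from_center hx hxa fun i => ?_
    by_cases h : x i < π / 2
    · simp [z, h, hx i, hy i]
    · simp [z, h, hx i, hy i,
        lt_of_le_of_ne (not_lt.1 h) (ne_pi_div_two_of_lt_sum_cos_sq (ha.trans hxa) i).symm]
  have hyz : JoinedIn (nodalComplement n a) y z := by
    refine joinedIn_away_from_center hy hya fun i => ?_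
    by_cases h : x i < π / 2
    · simp [z, h, (hxy i).1 h, hx i, hy i]
    · simp [z, h, hx i, hy i, lt_of_le_of_ne (not_lt.1 (mt (hxy i).2 h))
        (ne_pi_div_two_of_lt_sum_cos_sq (ha.trans hya) i).symm]
  exact hxz.trans hyz.symm

open Classical in
/-- The label of a nodal domain: `none` below the level `a`, and above it the orthant (relative to
the centre of the hypercube) of the point. -/
noncomputable def nodalLabel {n : ℕ} {a : ℝ} (x : nodalComplement n a) :
    Option (Fin n → Bool) :=
  if ∑ i, cos (x.1 i) ^ 2 < a then none else some fun i => decide (x.1 i < π / 2)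

theorem lt_sum_of_not_lt {n : ℕ} {a : ℝ} (x : nodalComplement n a)
    (h : ¬ ∑ i, cos (x.1 i) ^ 2 < a) : a < ∑ i, cos (x.1 i) ^ 2 :=
  lt_of_le_of_ne (not_lt.1 h) x.2.2.symm

theorem isLocallyConstant_nodalLabel {n : ℕ} {a : ℝ} (ha : (n : ℝ) - 1 < a) :
    IsLocallyConstant (nodalLabel : nodalComplement n a → Option (Fin n → Bool)) := by
  refine (IsLocallyConstant.iff_eventually_eq _).2 fun x => ?_
  have hcoord : ∀ i, Continuous fun y : nodalComplement n a => y.1 i := fun i =>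
    (continuous_apply i).comp continuous_subtype_val
  have hsum : Continuous fun y : nodalComplement n a => ∑ i, cos (y.1 i) ^ 2 :=
    continuous_finsetSum _ fun i _ => (continuous_cos.comp (hcoord i)).pow 2
  by_cases h : ∑ i, cos (x.1 i) ^ 2 < a
  · filter_upwards [hsum.continuousAt.eventually_lt_const h] with y hy
    simp [nodalLabel, h, hy]
  · have h' := lt_sum_of_not_lt x h
    have hside : ∀ᶠ y : nodalComplement n a in nhds x,
        ∀ i, (y.1 i < π / 2 ↔ x.1 i < π / 2) := by
      refine Filter.eventually_all.2 fun i => ?_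
      rcases (ne_pi_div_two_of_lt_sum_cos_sq (ha.trans h') i).lt_or_gt with hi | hi
      · filter_upwards [(hcoord i).continuousAt.eventually_lt_const hi] with y hy
        exact iff_of_true hy hi
      · filter_upwards [(hcoord i).continuousAt.eventually_const_lt hi] with y hy
        exact iff_of_false hy.not_gt hi.not_gt
    filter_upwards [hsum.continuousAt.eventually_const_lt h', hside] with y hy hys
    simp [nodalLabel, h, hy.not_gt, hys]

theorem joined_of_nodalLabel_eq {n : ℕ} {a : ℝ} (ha : (n : ℝ) - 1 < a)
    (x y : nodalComplement n a) (h : nodalLabel x = nodalLabel y) : Joined x y := by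
  suffices hj : JoinedIn (nodalComplement n a) x.1 y.1 from hj.joined_subtype
  unfold nodalLabel at h
  split_ifs at h with hx hy hy
  · exact (joinedIn_center x.2.1 hx).trans (joinedIn_center y.2.1 hy).symm
  · refine joinedIn_of_same_orthant ha x.2.1 (lt_sum_of_not_lt x hx) y.2.1
      (lt_sum_of_not_lt y hy) fun i => ?_
    simpa using congrFun (Option.some.inj h) i

theorem surjective_nodalLabel {n : ℕ} {a : ℝ} (ha₀ : 0 < a) (ha₂ : a < n) :
    Function.Surjective (nodalLabel : nodalComplement n a → Option (Fin n → Bool)) := by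
  have hpi := pi_pos
  have hn : (0 : ℝ) < n := ha₀.trans ha₂
  rintro (_ | b)
  · have hsum : ∑ _i : Fin n, cos (π / 2) ^ 2 < a := by simpa using ha₀
    refine ⟨⟨fun _ => π / 2, fun _ => ⟨by linarith, by linarith⟩, hsum.ne⟩, ?_⟩
    exact if_pos hsum
  · obtain ⟨c, hac, hc1⟩ := exists_between ((div_lt_one hn).2 ha₂)
    have hc0 : 0 < c := (div_pos ha₀ hn).trans hac
    set ε := arccos (√c)
    have hε0 : 0 < ε := arccos_pos.2 ((sqrt_lt' one_pos).2 (by simpa using hc1))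
    have hε1 : ε < π / 2 := arccos_lt_pi_div_two.2 (sqrt_pos.2 hc0)
    have hε : cos ε ^ 2 = c := by
      rw [cos_arccos (by linarith [sqrt_nonneg c]) (sqrt_le_one.2 hc1.le), sq_sqrt hc0.le]
    let x : Fin n → ℝ := fun i => if b i then ε else π - ε
    have hcos : ∀ i, cos (x i) ^ 2 = c := by
      intro i
      by_cases hb : b i <;> simp [x, hb, hε]
    have hsum : a < ∑ i, cos (x i) ^ 2 := by
      simpa [hcos, mul_comm] using (div_lt_iff₀ hn).1 hac
    have hx : ∀ i, 0 < x i ∧ x i < π := by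
      intro i
      dsimp only [x]
      split_ifs <;> constructor <;> linarith
    refine ⟨⟨x, hx, hsum.ne'⟩, ?_⟩
    refine (if_neg hsum.not_gt).trans (congrArg some (funext fun i => ?_))
    by_cases hb : b i
    · simp [x, hb, hε1]
    · have : π / 2 ≤ π - ε := by linarith
      simp [x, hb, this]

/-- For `n ≥ 1` and `n − 1 < a < n`, the complement in the open hypercube `(0,π)ⁿ` of the
nodal set of `Ψ_a(x) = cos²x₁ + ⋯ + cos²xₙ − a` has exactly `2ⁿ + 1` connected
components. -/
theorem components_hypercube_nodal (n : ℕ) (hn : 1 ≤ n) (a : ℝ)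
    (ha₁ : (n : ℝ) - 1 < a) (ha₂ : a < n) :
    Nat.card (ConnectedComponents
      ↥{x : Fin n → ℝ | (∀ i, 0 < x i ∧ x i < π) ∧ ∑ i, cos (x i) ^ 2 ≠ a})
    = 2 ^ n + 1 := by
  have hn' : (1 : ℝ) ≤ n := by exact_mod_cast hn
  let _ : TopologicalSpace (Option (Fin n → Bool)) := ⊥
  have _ : DiscreteTopology (Option (Fin n → Bool)) := ⟨rfl⟩
  refine (card_connectedComponents_eq_of_joined
    (isLocallyConstant_nodalLabel ha₁).continuous (surjective_nodalLabel (by linarith) ha₂)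
    (joined_of_nodalLabel_eq ha₁)).trans ?_
  simp
end

section
/- Let 0 < c < a < 4π. The set Ω := {(x,y) ∈ ℝ² : 0 < x < 4π, 0 < y < 2π, x ≠ c} \ ((0,a] × {π}) has exactly 3 connected components. -/
open Real

/-- The connected components of a set partitioned into connected open pieces are in bijection with
the pieces. -/
theorem card_connectedComponents_of_eq_iUnion_isOpen {X ι : Type*} [TopologicalSpace X]
    {s : Set X} {V : ι → Set X} (hs : s = ⋃ i, V i) (hopen : ∀ i, IsOpen (V i))
    (hdisj : Pairwise (Function.onFun Disjoint V)) (hconn : ∀ i, IsConnected (V i)) :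
    Nat.card (ConnectedComponents s) = Nat.card ι := by
  let U : ι → Set s := fun i ↦ Subtype.val ⁻¹' V i
  have hUopen (i : ι) : IsOpen (U i) := (hopen i).preimage continuous_subtype_val
  have hUdisj : Pairwise (Function.onFun Disjoint U) := fun i j hij ↦ (hdisj hij).preimage _
  have hUunion : ⋃ i, U i = Set.univ := by
    rw [← Set.preimage_iUnion, ← hs, Subtype.coe_preimage_self]
  have hUclopen (i : ι) : IsClopen (U i) := by
    refine ⟨⟨?_⟩, hUopen i⟩
    have hcompl : (U i)ᶜ = ⋃ j, ⋃ (_ : j ≠ i), U j := by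
      ext x
      simp only [Set.mem_compl_iff, Set.mem_iUnion, exists_prop]
      constructor
      · intro hx
        obtain ⟨j, hj⟩ := Set.iUnion_eq_univ_iff.mp hUunion x
        exact ⟨j, fun h ↦ hx (h ▸ hj), hj⟩
      · rintro ⟨j, hji, hj⟩ hi
        exact Set.disjoint_left.mp (hUdisj hji) hj hi
    rw [hcompl]
    exact isOpen_iUnion fun j ↦ isOpen_iUnion fun _ ↦ hUopen j
  have hUconn (i : ι) : IsConnected (U i) := by
    have himage : Subtype.val '' U i = V i := by
      rw [Subtype.image_preimage_coe, Set.inter_eq_right, hs]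
      exact Set.subset_iUnion V i
    refine ⟨Set.image_nonempty.mp (himage ▸ (hconn i).nonempty), ?_⟩
    rw [← Topology.IsInducing.subtypeVal.isPreconnected_image, himage]
    exact (hconn i).isPreconnected
  exact Nat.card_congr
    (ConnectedComponents.equivOfIsClopenOfIsConnected hUclopen hUdisj hUunion hUconn)

/-- A nonempty open rectangle is connected. -/
theorem isConnected_Ioo_prod_Ioo {a b c d : ℝ} (hab : a < b) (hcd : c < d) :
    IsConnected (Set.Ioo a b ×ˢ Set.Ioo c d) :=
  (isConnected_Ioo hab).prod (isConnected_Ioo hcd)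

/-- An open rectangle with a horizontal crack that does not reach its right side is connected:
it is the union of the parts below the crack, to the right of it, and above it. -/
theorem isConnected_rectangle_union {c a b l m u : ℝ} (hca : c < a) (hab : a < b)
    (hlm : l < m) (hmu : m < u) :
    IsConnected ((Set.Ioo c b ×ˢ Set.Ioo l m ∪ Set.Ioo a b ×ˢ Set.Ioo l u) ∪
      Set.Ioo c b ×ˢ Set.Ioo m u) := by
  obtain ⟨x, hax, hxb⟩ := exists_between hab
  obtain ⟨y, hly, hym⟩ := exists_between hlm
  obtain ⟨z, hmz, hzu⟩ := exists_between hmu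
  have hcx := hca.trans hax
  refine .union ⟨(x, z), .inr ?_, ?_⟩
    (.union ⟨(x, y), ?_, ?_⟩ (isConnected_Ioo_prod_Ioo (hca.trans hab) hlm)
      (isConnected_Ioo_prod_Ioo hab (hlm.trans hmu)))
    (isConnected_Ioo_prod_Ioo (hca.trans hab) hmu)
  · exact ⟨⟨hax, hxb⟩, hlm.trans hmz, hzu⟩
  · exact ⟨⟨hcx, hxb⟩, hmz, hzu⟩
  · exact ⟨⟨hcx, hxb⟩, hly, hym⟩
  · exact ⟨⟨hax, hxb⟩, hly, hym.trans hmu⟩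

/-- The rectangle `(0,4π) × (0,2π)` with the horizontal crack `(0,a] × {π}` removed, and
further cut along the vertical line `{x = c}` (the nodal line of a suitable linear
combination of the first two eigenfunctions of the cracked rectangle), has exactly
`3` connected components. -/
theorem three_components_cracked_rectangle (a c : ℝ) (hc : 0 < c) (hca : c < a)
    (ha : a < 4 * π) :
    Nat.card (ConnectedComponents
      ↥({p : ℝ × ℝ | 0 < p.1 ∧ p.1 < 4 * π ∧ 0 < p.2 ∧ p.2 < 2 * π ∧ p.1 ≠ c}
        \ (Set.Ioc 0 a ×ˢ {π}))) = 3 := by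
  have hπ := pi_pos
  have hπ2 : π < 2 * π := by linarith
  let V : Fin 3 → Set (ℝ × ℝ) :=
    ![Set.Ioo 0 c ×ˢ Set.Ioo 0 π, Set.Ioo 0 c ×ˢ Set.Ioo π (2 * π),
      (Set.Ioo c (4 * π) ×ˢ Set.Ioo 0 π ∪ Set.Ioo a (4 * π) ×ˢ Set.Ioo 0 (2 * π)) ∪
        Set.Ioo c (4 * π) ×ˢ Set.Ioo π (2 * π)]
  have hopen (l r d u : ℝ) : IsOpen (Set.Ioo l r ×ˢ Set.Ioo d u) := isOpen_Ioo.prod isOpen_Ioo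
  rw [card_connectedComponents_of_eq_iUnion_isOpen (V := V), Nat.card_fin]
  · ext ⟨x, y⟩
    have hiUnion : (x, y) ∈ ⋃ i, V i ↔ (x, y) ∈ V 0 ∨ (x, y) ∈ V 1 ∨ (x, y) ∈ V 2 := by
      simp [Fin.exists_fin_succ]
    rw [hiUnion]
    simp only [Set.mem_sdiff, Set.mem_ofPred_eq, Set.mem_prod, Set.mem_Ioc, Set.mem_singleton_iff,
      V, Set.mem_union, Set.mem_Ioo, Matrix.cons_val]
    clear hiUnion hopen V
    constructor
    · rintro ⟨⟨hx, hx4, hy, hy2, hxc⟩, hcrack⟩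
      rcases lt_or_gt_of_ne hxc with h | h <;> rcases lt_trichotomy y π with h' | h' | h' <;> grind
    · grind
  · intro i
    fin_cases i
    · exact hopen ..
    · exact hopen ..
    · exact ((hopen ..).union (hopen ..)).union (hopen ..)
  · intro i j hij
    rw [Function.onFun, Set.disjoint_left]
    rintro ⟨x, y⟩ hi hj
    fin_cases i <;> fin_cases j <;> simp [V] at hij hi hj <;> grind
  · intro i
    fin_cases i
    · exact isConnected_Ioo_prod_Ioo hc hπ
    · exact isConnected_Ioo_prod_Ioo hc hπ2
    · exact isConnected_rectangle_union hca ha hπ hπ2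
end

section
/- Let 0 < a ≤ 1 and let b be a real number with 1 − a < b < 1. Let S² := {(x,y,z) ∈ ℝ³ : x² + y² + z² = 1}, and let K_a := {(x,y,z) ∈ S² : (x = 0 or y = 0) and z ≥ 1 − a} be the cross-shaped crack through the north pole. Then the set {(x,y,z) ∈ S² : (x,y,z) ∉ K_a and z ≠ b} has exactly 5 connected components. -/
/-- The unit sphere in `ℝ³`. -/
def unitSphere2 : Set (ℝ × ℝ × ℝ) :=
  {p | p.1 ^ 2 + p.2.1 ^ 2 + p.2.2 ^ 2 = 1}

/-- The cross-shaped crack through the north pole: the points of the sphere lying on the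
planes `x = 0` or `y = 0` with `z ≥ 1 − a`. -/
def crossCrack (a : ℝ) : Set (ℝ × ℝ × ℝ) :=
  {p ∈ unitSphere2 | (p.1 = 0 ∨ p.2.1 = 0) ∧ 1 - a ≤ p.2.2}

open Topology

/-- Any two points of a preconnected subset of `X` lie in the same component of `X`. -/
theorem connectedComponents_mk_eq_of_isPreconnected {E : Type*} [TopologicalSpace E]
    {X S : Set E} (hS : IsPreconnected S) (hSX : S ⊆ X) {p q : X}
    (hp : (p : E) ∈ S) (hq : (q : E) ∈ S) :
    (p : ConnectedComponents X) = q := by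
  have h : IsPreconnected ((↑) ⁻¹' S : Set X) := by
    rw [← IsInducing.subtypeVal.isPreconnected_image, Subtype.image_preimage_coe,
      Set.inter_eq_right.mpr hSX]
    exact hS
  exact ConnectedComponents.coe_eq_coe'.mpr (h.subset_connectedComponent hq hp)

/-- A continuous surjection onto a discrete space whose fibres lie in single components
counts the components. -/
theorem card_connectedComponents_eq_of_surjective {X T : Type*} [TopologicalSpace X]
    {f : X → T} (hf : IsLocallyConstant f) (hsurj : Function.Surjective f)
    (hfib : ∀ p q, f p = f q → (p : ConnectedComponents X) = q) :
    Nat.card (ConnectedComponents X) = Nat.card T := by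
  let _ : TopologicalSpace T := ⊥
  have : DiscreteTopology T := ⟨rfl⟩
  refine Nat.card_eq_of_bijective hf.continuous.connectedComponentsLift ⟨?_, fun t => ?_⟩
  · intro c d h
    obtain ⟨p, rfl⟩ := ConnectedComponents.surjective_coe c
    obtain ⟨q, rfl⟩ := ConnectedComponents.surjective_coe d
    exact hfib p q (by simpa using h)
  · obtain ⟨p, rfl⟩ := hsurj t
    exact ⟨p, by simp⟩

/-- The part of the open cap `z > b` over an open quadrant is connected. -/
theorem isPreconnected_cap_quadrant {b : ℝ} (hb : 0 < b) (u v : ℝ) :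
    IsPreconnected {p : ℝ × ℝ × ℝ | p ∈ unitSphere2 ∧ b < p.2.2 ∧ 0 < u * p.1 ∧
      0 < v * p.2.1} := by
  have hD : Convex ℝ {w : ℝ × ℝ | w.1 ^ 2 + w.2 ^ 2 < 1 - b ^ 2 ∧ 0 < u * w.1 ∧
      0 < v * w.2} := by
    rintro ⟨x, y⟩ ⟨h, hx, hy⟩ ⟨x', y'⟩ ⟨h', hx', hy'⟩ s t hs ht hst
    simp only [Prod.smul_mk, Prod.mk_add_mk, smul_eq_mul, Set.mem_ofPred_eq] at *
    obtain rfl : t = 1 - s := by linarith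
    have key : ∀ c d : ℝ, 0 < c → 0 < d → 0 < s * c + (1 - s) * d := fun c d hc hd => by
      rcases hs.eq_or_lt with rfl | hs
      · simpa using hd
      · have := mul_pos hs hc
        have := mul_nonneg ht hd.le
        linarith
    refine ⟨?_, ?_, ?_⟩
    · have h1 := key _ _ (sub_pos.mpr h) (sub_pos.mpr h')
      nlinarith [mul_nonneg (mul_nonneg hs ht) (sq_nonneg (x - x')),
        mul_nonneg (mul_nonneg hs ht) (sq_nonneg (y - y'))]
    · linarith [key _ _ hx hx']
    · linarith [key _ _ hy hy']
  convert hD.isPreconnected.image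
    (fun w : ℝ × ℝ => (w.1, w.2, √(1 - w.1 ^ 2 - w.2 ^ 2))) (by fun_prop) using 1
  ext ⟨x, y, z⟩
  simp only [unitSphere2, Set.mem_ofPred_eq, Set.mem_image, Prod.exists, Prod.mk.injEq]
  constructor
  · rintro ⟨h, hz, hx, hy⟩
    refine ⟨x, y, ⟨by nlinarith, hx, hy⟩, rfl, rfl, ?_⟩
    rw [show 1 - x ^ 2 - y ^ 2 = z ^ 2 by linarith, Real.sqrt_sq (hb.trans hz).le]
  · rintro ⟨x, y, ⟨h, hx, hy⟩, rfl, rfl, rfl⟩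
    refine ⟨?_, Real.lt_sqrt_of_sq_lt (by linarith), hx, hy⟩
    rw [Real.sq_sqrt (by nlinarith)]
    ring

/-- The part of the cracked sphere below a level `b < 1` is connected: each of its points is
joined to the south pole by a meridian arc. -/
theorem isPreconnected_below {a b : ℝ} (ha : a ≤ 1) (hb₀ : 0 < b) (hb : b < 1) :
    IsPreconnected {p : ℝ × ℝ × ℝ | p ∈ unitSphere2 ∧ p ∉ crossCrack a ∧ p.2.2 < b} := by
  refine isPreconnected_of_forall ((0, 0, -1) : ℝ × ℝ × ℝ) ?_
  rintro ⟨x, y, z⟩ ⟨hs, hc, hz⟩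
  simp only [unitSphere2, crossCrack, Set.mem_ofPred_eq, not_and, not_le] at hs hc hz
  have hz1 : -1 ≤ z := by nlinarith [sq_nonneg x, sq_nonneg y]
  rcases hz1.eq_or_lt with rfl | hz1
  · have hx : x = 0 := by nlinarith [sq_nonneg x, sq_nonneg y]
    have hy : y = 0 := by nlinarith [sq_nonneg x, sq_nonneg y]
    subst hx hy
    refine ⟨{(0, 0, -1)}, ?_, rfl, rfl, isPreconnected_singleton⟩
    rintro _ rfl
    exact ⟨by simp [unitSphere2], by simp [crossCrack]; intro; linarith, by simp; linarith⟩
  have hr : 0 < 1 - z ^ 2 := by nlinarith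
  refine ⟨(fun t : ℝ => (x * √((1 - t ^ 2) / (1 - z ^ 2)),
    y * √((1 - t ^ 2) / (1 - z ^ 2)), t)) '' Set.Icc (-1) z, ?_,
    ⟨-1, ⟨le_rfl, hz1.le⟩, by simp⟩, ⟨z, ⟨hz1.le, le_rfl⟩, by simp [div_self hr.ne']⟩,
    isPreconnected_Icc.image _ (by fun_prop)⟩
  rintro _ ⟨t, ⟨ht, htz⟩, rfl⟩
  have hsq : 0 ≤ (1 - t ^ 2) / (1 - z ^ 2) := div_nonneg (by nlinarith) hr.le
  simp only [unitSphere2, crossCrack, Set.mem_ofPred_eq, not_and, not_le]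
  refine ⟨?_, fun _ h => ?_, htz.trans_lt hz⟩
  · rw [mul_pow, mul_pow, Real.sq_sqrt hsq, ← add_mul,
      show x ^ 2 + y ^ 2 = 1 - z ^ 2 by linarith, mul_div_cancel₀ _ hr.ne']
    ring
  · rcases ht.eq_or_lt with rfl | ht
    · linarith
    have hne : √((1 - t ^ 2) / (1 - z ^ 2)) ≠ 0 :=
      (Real.sqrt_pos.mpr (div_pos (by nlinarith) hr)).ne'
    simp only [mul_eq_zero, hne, or_false] at h
    exact htz.trans_lt (hc hs h)

open Classical in
/-- The label of a point off the level `z = b`: `none` below the level, and the signs of the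
first two coordinates above it. -/
noncomputable def quadrantLabel (b : ℝ) (p : ℝ × ℝ × ℝ) : Option (Bool × Bool) :=
  if p.2.2 < b then none else some (decide (0 < p.1), decide (0 < p.2.1))

theorem eventually_pos_iff {X : Type*} [TopologicalSpace X] {g : X → ℝ} (hg : Continuous g)
    {p : X} (hp : g p ≠ 0) : ∀ᶠ q in 𝓝 p, (0 < g q ↔ 0 < g p) := by
  rcases hp.lt_or_gt with h | h
  · filter_upwards [hg.continuousAt.eventually_lt continuousAt_const h] with q hq
    exact iff_of_false hq.not_gt h.not_gt
  · filter_upwards [continuousAt_const.eventually_lt hg.continuousAt h] with q hq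
    exact iff_of_true hq h

theorem mul_pos_of_pos_iff {c d : ℝ} (hc : c ≠ 0) (hd : d ≠ 0) (h : 0 < c ↔ 0 < d) :
    0 < c * d := by
  rcases hc.lt_or_gt with hc | hc
  · exact mul_pos_of_neg_of_neg hc (lt_of_le_of_ne (not_lt.mp fun hd' => hc.not_gt (h.mpr hd')) hd)
  · exact mul_pos hc (h.mp hc)

/-- For `0 < a ≤ 1` and `1 − a < b < 1`, the complement in the cracked sphere
`S² \ K_a` of the level set `{z = b}` has exactly `5` connected components: the
counterexample to the Extended Courant Property for the sphere with cracks. -/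
theorem five_components_cracked_sphere (a b : ℝ) (ha₀ : 0 < a) (ha₁ : a ≤ 1)
    (hb₁ : 1 - a < b) (hb₂ : b < 1) :
    Nat.card (ConnectedComponents
      ↥{p : ℝ × ℝ × ℝ | p ∈ unitSphere2 ∧ p ∉ crossCrack a ∧ p.2.2 ≠ b}) = 5 := by
  set X := {p : ℝ × ℝ × ℝ | p ∈ unitSphere2 ∧ p ∉ crossCrack a ∧ p.2.2 ≠ b}
  have hb₀ : 0 < b := by linarith
  have hne : ∀ p ∈ X, ¬ p.2.2 < b → b < p.2.2 ∧ p.1 ≠ 0 ∧ p.2.1 ≠ 0 := by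
    rintro p ⟨hs, hc, hz⟩ hpb
    have hz' : b < p.2.2 := lt_of_le_of_ne (not_lt.mp hpb) hz.symm
    exact ⟨hz', fun h => hc ⟨hs, .inl h, by linarith⟩, fun h => hc ⟨hs, .inr h, by linarith⟩⟩
  have hcard : Nat.card (Option (Bool × Bool)) = 5 := by simp
  rw [← hcard]
  refine card_connectedComponents_eq_of_surjective (f := fun p : X => quadrantLabel b p)
    ?_ ?_ ?_
  · rw [IsLocallyConstant.iff_eventually_eq]
    intro p
    by_cases hpb : p.1.2.2 < b
    · have hcont : Continuous fun q : X => q.1.2.2 := by fun_prop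
      filter_upwards [hcont.continuousAt.eventually_lt continuousAt_const hpb] with q hq
      simp [quadrantLabel, hpb, hq]
    · obtain ⟨hz, hx, hy⟩ := hne p p.2 hpb
      have hcont : Continuous fun q : X => q.1.2.2 := by fun_prop
      filter_upwards [continuousAt_const.eventually_lt hcont.continuousAt hz,
        eventually_pos_iff (g := fun q : X => q.1.1) (by fun_prop) hx,
        eventually_pos_iff (g := fun q : X => q.1.2.1) (by fun_prop) hy] with q hq hqx hqy
      simp [quadrantLabel, hpb, hq.not_gt, hqx, hqy]
  · rintro (_ | ⟨s, t⟩)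
    · refine ⟨⟨(0, 0, -1), by simp [unitSphere2], ?_, ?_⟩, ?_⟩
      · rintro ⟨-, -, h⟩
        simp only at h
        linarith
      · simp only; linarith
      · simp only [quadrantLabel]
        rw [if_pos (by linarith)]
    · set z := (1 + b) / 2 with hz
      set r := √((1 - z ^ 2) / 2)
      have hpos : 0 < (1 - z ^ 2) / 2 := by nlinarith
      have hr₀ : 0 < r := Real.sqrt_pos.mpr hpos
      have hr₂ : r ^ 2 = (1 - z ^ 2) / 2 := Real.sq_sqrt hpos.le
      have hzb : b < z := by linarith
      refine ⟨⟨(bif s then r else -r, bif t then r else -r, z), ?_, ?_, hzb.ne'⟩, ?_⟩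
      · cases s <;> cases t <;> simp [unitSphere2] <;> linarith
      · rintro ⟨-, h, -⟩
        cases s <;> cases t <;> simp [hr₀.ne'] at h
      · cases s <;> cases t <;> simp [quadrantLabel, hzb.not_gt, hr₀, hr₀.le]
  · intro p q h
    simp only [quadrantLabel] at h
    by_cases hp : p.1.2.2 < b <;> by_cases hq : q.1.2.2 < b
    · refine connectedComponents_mk_eq_of_isPreconnected (isPreconnected_below ha₁ hb₀ hb₂)
        ?_ ⟨p.2.1, p.2.2.1, hp⟩ ⟨q.2.1, q.2.2.1, hq⟩
      exact fun w hw => ⟨hw.1, hw.2.1, hw.2.2.ne⟩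
    · simp [hp, hq] at h
    · simp [hp, hq] at h
    · simp only [hp, hq, if_false, Option.some.injEq, Prod.mk.injEq, decide_eq_decide] at h
      obtain ⟨hpz, hpx, hpy⟩ := hne p p.2 hp
      obtain ⟨hqz, hqx, hqy⟩ := hne q q.2 hq
      refine connectedComponents_mk_eq_of_isPreconnected
        (isPreconnected_cap_quadrant hb₀ p.1.1 p.1.2.1) ?_
        ⟨p.2.1, hpz, mul_pos_of_pos_iff hpx hpx Iff.rfl, mul_pos_of_pos_iff hpy hpy Iff.rfl⟩
        ⟨q.2.1, hqz, mul_pos_of_pos_iff hpx hqx h.1, mul_pos_of_pos_iff hpy hqy h.2⟩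
      rintro w ⟨hw, hwz, hwx, hwy⟩
      refine ⟨hw, ?_, hwz.ne'⟩
      rintro ⟨-, h | h, -⟩
      · simp [h] at hwx
      · simp [h] at hwy
end
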